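/- Let T be a rooted tree on the vertex set of a flow graph G that has the parent property. If (v', w) is the derived arc of an arc (v, w) ∈ A, then there is a path in G from v' to w containing only w and descendants of v' in T. -/

import Mathlib

variable {V : Type*}

/-- `IsWalk A u v p`: `p` is a path from `u` to `v` in the digraph with arc
relation `A`, listing all of its vertices in order. -/
def IsWalk (A : V → V → Prop) (u v : V) (p : List V) : Prop :=
  p.Chain' A ∧ p.head? = some u ∧ p.getLast? = some v

/-- A flow graph: a directed graph with arc relation `A` and start vertex `s`
such that every vertex is reachable from `s` and no arc enters `s`. -/
structure FlowGraph (V : Type*) where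
  A : V → V → Prop
  s : V
  reach : ∀ v : V, ∃ p : List V, IsWalk A s v p
  no_enter : ∀ v : V, ¬ A v s

/-- `DomOn A s v w`: `v` lies on every path from `s` to `w` in the digraph with
arc relation `A`. -/
def DomOn (A : V → V → Prop) (s v w : V) : Prop :=
  ∀ p : List V, IsWalk A s w p → v ∈ p

/-- `v` dominates `w` in the flow graph `G`. -/
def FlowGraph.Dom (G : FlowGraph V) (v w : V) : Prop :=
  DomOn G.A G.s v w

/-- A rooted tree on vertex set `V`, given by a parent function: the root is a
fixed point of the parent function, and iterating the parent function from any
vertex eventually reaches the root. -/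
structure ParentTree (V : Type*) where
  parent : V → V
  root : V
  parent_root : parent root = root
  reaches_root : ∀ v : V, ∃ n : ℕ, parent^[n] v = root

/-- `T.Anc x y`: `x` is an ancestor of `y` in the rooted tree `T` (every vertex
is an ancestor of itself). -/
def ParentTree.Anc (T : ParentTree V) (x y : V) : Prop :=
  ∃ n : ℕ, T.parent^[n] y = x

/-- `T` has the parent property with respect to `G`: for every arc `(v, w)`,
the parent of `w` is an ancestor of `v` in `T`. -/
def ParentProperty (G : FlowGraph V) (T : ParentTree V) : Prop :=
  ∀ v w : V, G.A v w → T.Anc (T.parent w) v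

/-- The sibling property with respect to an arbitrary arc relation `A` with
start vertex `s`: no non-root vertex dominates a distinct vertex with the same
parent. -/
def SiblingPropertyOn (A : V → V → Prop) (s : V) (T : ParentTree V) : Prop :=
  ∀ v w : V, v ≠ T.root → w ≠ T.root → v ≠ w → T.parent v = T.parent w →
    ¬ DomOn A s v w

/-- `T` has the sibling property with respect to the flow graph `G`. -/
def SiblingProperty (G : FlowGraph V) (T : ParentTree V) : Prop :=
  SiblingPropertyOn G.A G.s T

/-- `T` is the dominator tree of the digraph with arc relation `A` and start
vertex `s`: `T` is rooted at `s`, and the parent of every vertex `v ≠ s` is its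
immediate dominator, i.e. a strict dominator of `v` that is dominated by every
strict dominator of `v`. -/
def IsDomTreeOn (A : V → V → Prop) (s : V) (T : ParentTree V) : Prop :=
  T.root = s ∧ ∀ v : V, v ≠ s →
    DomOn A s (T.parent v) v ∧ T.parent v ≠ v ∧
    ∀ u : V, DomOn A s u v → u ≠ v → DomOn A s u (T.parent v)

/-- `T` is the dominator tree of the flow graph `G`. -/
def IsDomTree (G : FlowGraph V) (T : ParentTree V) : Prop :=
  IsDomTreeOn G.A G.s T

/-- `ord` is (the numbering of) a preorder of the rooted tree `T`: an injective
numbering of the vertices such that for every vertex `v` the descendants of `v`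
are ordered consecutively, with `v` first. -/
def IsTreePreorder (T : ParentTree V) (ord : V → ℕ) : Prop :=
  Function.Injective ord ∧
  (∀ v x : V, T.Anc v x → ord v ≤ ord x) ∧
  (∀ v x y z : V, T.Anc v x → T.Anc v z → ord x ≤ ord y → ord y ≤ ord z →
    T.Anc v y)

/-- A preorder `ord` of `T` is low-high on the digraph with arc relation `A`
and start vertex `s`: for every `v ≠ s`, either `(t(v), v)` is an arc, or there
are arcs `(u, v)` and `(w, v)` with `u < v < w` in the order and `w` not a
descendant of `v` in `T`. -/
def LowHighOn (A : V → V → Prop) (s : V) (T : ParentTree V) (ord : V → ℕ) :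
    Prop :=
  IsTreePreorder T ord ∧
  ∀ v : V, v ≠ s → (A (T.parent v) v ∨
    ∃ u w : V, A u v ∧ A w v ∧ ord u < ord v ∧ ord v < ord w ∧ ¬ T.Anc v w)

/-- A low-high order of `T` on the flow graph `G`. -/
def LowHigh (G : FlowGraph V) (T : ParentTree V) (ord : V → ℕ) : Prop :=
  LowHighOn G.A G.s T ord

/-- `B` is (the arc relation of) a spanning tree of `G` rooted at `s`: a
subgraph of `G` in which no arc enters `s`, every vertex other than `s` has
exactly one entering arc, and every vertex is reachable from `s`. -/
def IsSpanningTree (G : FlowGraph V) (B : V → V → Prop) : Prop :=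
  (∀ u v : V, B u v → G.A u v) ∧
  (∀ v : V, ¬ B v G.s) ∧
  (∀ v : V, v ≠ G.s → ∃! u : V, B u v) ∧
  (∀ v : V, ∃ p : List V, IsWalk B G.s v p)

/-- Spanning trees `B` and `R` of `G` rooted at `s` are independent: for every
vertex `v`, the paths from `s` to `v` in `B` and in `R` have in common only
dominators of `v`. -/
def Independent (G : FlowGraph V) (B R : V → V → Prop) : Prop :=
  ∀ v : V, ∀ p q : List V, IsWalk B G.s v p → IsWalk R G.s v q →
    ∀ x : V, x ∈ p → x ∈ q → G.Dom x v

/-- Spanning trees `B` and `R` of `G` rooted at `s` are strongly independent: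
for every pair of vertices `v`, `w`, either the path from `s` to `v` in `B` and
the path from `s` to `w` in `R` have in common only common dominators of `v`
and `w`, or the same holds with the roles of `B` and `R` exchanged. -/
def StronglyIndependent (G : FlowGraph V) (B R : V → V → Prop) : Prop :=
  ∀ v w : V,
    (∀ p q : List V, IsWalk B G.s v p → IsWalk R G.s w q →
      ∀ x : V, x ∈ p → x ∈ q → G.Dom x v ∧ G.Dom x w) ∨
    (∀ p q : List V, IsWalk R G.s v p → IsWalk B G.s w q →
      ∀ x : V, x ∈ p → x ∈ q → G.Dom x v ∧ G.Dom x w)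

/-- `IsDerivedArcOf G T v b a`: `(a, b)` is the derived arc of the arc `(v, b)`
of `G` with respect to `T`: `b` is not an ancestor of `v` in `T`, and `a = v`
if `v` is the parent of `b`, while otherwise `a` is the sibling of `b` in `T`
that is an ancestor of `v`. -/
def IsDerivedArcOf (G : FlowGraph V) (T : ParentTree V) (v b a : V) : Prop :=
  G.A v b ∧ ¬ T.Anc b v ∧
    ((v = T.parent b ∧ a = v) ∨
     (v ≠ T.parent b ∧ a ≠ T.root ∧ T.parent a = T.parent b ∧ T.Anc a v))

/-- The arc relation of the derived graph of `G` with respect to `T`. -/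
def DerivedArc (G : FlowGraph V) (T : ParentTree V) (a b : V) : Prop :=
  ∃ v : V, IsDerivedArcOf G T v b a

/-- `S` is the vertex set of a strongly connected subgraph of the digraph with
arc relation `A`. -/
def StronglyConnectedSet (A : V → V → Prop) (S : Set V) : Prop :=
  S.Nonempty ∧ ∀ u ∈ S, ∀ v ∈ S, ∃ p : List V,
    IsWalk A u v p ∧ ∀ x ∈ p, x ∈ S

/-- `G` is reducible: every strongly connected subgraph has a single entry
vertex, i.e. a vertex of the subgraph contained in every path from `s` to a
vertex of the subgraph. -/
def Reducible (G : FlowGraph V) : Prop :=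
  ∀ S : Set V, StronglyConnectedSet G.A S →
    ∃ v ∈ S, ∀ u ∈ S, ∀ p : List V, IsWalk G.A G.s u p → v ∈ p

/-- A digraph is acyclic if it has no cycle (a path from a vertex to itself
with at least one arc). -/
def Acyclic (A : V → V → Prop) : Prop :=
  ¬ ∃ (v : V) (p : List V), IsWalk A v v p ∧ 2 ≤ p.length

/-- `IsHighWalk A ν u v p`: `p` is a high path from `u` to `v`: a path all of
whose vertices other than `u` and `v` are greater (in the numbering `ν`) than
both `u` and `v`. -/
def IsHighWalk (A : V → V → Prop) (ν : V → ℕ) (u v : V) (p : List V) : Prop :=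
  IsWalk A u v p ∧ ∀ x ∈ p, x ≠ u → x ≠ v → ν u < ν x ∧ ν v < ν x

/-!
By the parent property, an arc that enters the subtree of `a` from outside can only enter it at
`a`: if `(y, z)` is an arc and `z ≠ a` is a descendant of `a`, then `t(z)` is a descendant of `a`
and an ancestor of `y`. Hence on a path from the root to a descendant `v` of `a`, the part after
the last visit to `a` stays among the descendants of `a`. The tail `a` of the derived arc of
`(v, w)` is an ancestor of `v`, so appending `w` to such a path from `a` to `v` suffices.
-/

/-- There is a path from `u` to `v` in the digraph with arc relation `A` all of whose vertices,
including `u` and `v`, lie in `S`. -/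
def ReachableWithin (A : V → V → Prop) (S : Set V) (u v : V) : Prop :=
  ∃ p : List V, IsWalk A u v p ∧ ∀ x ∈ p, x ∈ S

section Walks

variable {A : V → V → Prop} {S : Set V} {a u v w x : V} {p : List V}

namespace IsWalk

theorem singleton (A : V → V → Prop) (u : V) : IsWalk A u u [u] :=
  ⟨List.isChain_singleton u, rfl, rfl⟩

theorem concat (hp : IsWalk A u v p) (hvw : A v w) : IsWalk A u w (p ++ [w]) := by
  obtain ⟨hchain, hhead, hlast⟩ := hp
  refine ⟨hchain.append (List.isChain_singleton w) ?_, ?_, List.getLast?_concat⟩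
  · rintro y hy z hz
    obtain rfl : v = y := Option.some_injective _ (hlast.symm.trans hy)
    obtain rfl : w = z := Option.some_injective _ hz
    exact hvw
  · rw [List.head?_append, hhead, Option.some_or]

theorem reflTransGen (hp : IsWalk A u v p) : Relation.ReflTransGen A u v := by
  obtain ⟨hchain, hhead, hlast⟩ := hp
  obtain ⟨l, rfl⟩ := List.head?_eq_some_iff.mp hhead
  exact List.relationReflTransGen_of_exists_isChain_cons l hchain
    (Option.some_injective _ ((List.getLast?_eq_some_getLast _).symm.trans hlast))

end IsWalk

namespace ReachableWithin

theorem refl (hu : u ∈ S) : ReachableWithin A S u u :=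
  ⟨[u], .singleton A u, List.forall_mem_singleton.mpr hu⟩

theorem tail (h : ReachableWithin A S u v) (hvw : A v w) (hw : w ∈ S) :
    ReachableWithin A S u w := by
  obtain ⟨p, hp, hpS⟩ := h
  exact ⟨p ++ [w], hp.concat hvw,
    List.forall_mem_append.mpr ⟨hpS, List.forall_mem_singleton.mpr hw⟩⟩

theorem mono {S' : Set V} (hS : S ⊆ S') (h : ReachableWithin A S u v) :
    ReachableWithin A S' u v := by
  obtain ⟨p, hp, hpS⟩ := h
  exact ⟨p, hp, fun x hx ↦ hS (hpS x hx)⟩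

theorem of_unique_entry (hentry : ∀ y z, A y z → z ∈ S → y ∈ S ∨ z = a)
    (hu : u ∈ S → u = a) (hux : Relation.ReflTransGen A u x) (hx : x ∈ S) :
    ReachableWithin A S a x := by
  induction hux with
  | refl => exact hu hx ▸ refl hx
  | tail _ hyz ih =>
    rcases hentry _ _ hyz hx with hy | rfl
    · exact (ih hy).tail hyz hx
    · exact refl hx

end ReachableWithin

end Walks

namespace ParentTree

variable {T : ParentTree V} {a b c : V}

theorem Anc.refl (T : ParentTree V) (a : V) : T.Anc a a :=
  ⟨0, rfl⟩

theorem Anc.trans (hab : T.Anc a b) (hbc : T.Anc b c) : T.Anc a c := by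
  obtain ⟨m, rfl⟩ := hab
  obtain ⟨n, rfl⟩ := hbc
  exact ⟨m + n, Function.iterate_add_apply _ _ _ _⟩

theorem Anc.anc_parent_or_eq (h : T.Anc a b) : T.Anc a (T.parent b) ∨ b = a := by
  obtain ⟨n, hn⟩ := h
  cases n with
  | zero => exact .inr hn
  | succ n => exact .inl ⟨n, hn⟩

theorem Anc.root_eq (h : T.Anc a T.root) : T.root = a := by
  obtain ⟨n, hn⟩ := h
  rwa [Function.iterate_fixed T.parent_root] at hn

end ParentTree

section DerivedArcs

variable {G : FlowGraph V} {T : ParentTree V} {a v w : V}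

theorem ParentProperty.anc_or_eq_of_arc (hpp : ParentProperty G T) (hvw : G.A v w)
    (haw : T.Anc a w) : T.Anc a v ∨ w = a :=
  haw.anc_parent_or_eq.imp_left fun h ↦ h.trans (hpp v w hvw)

theorem ParentProperty.reachableWithin_of_anc (hpp : ParentProperty G T) (hroot : T.root = G.s)
    (hav : T.Anc a v) : ReachableWithin G.A {x | T.Anc a x} a v := by
  obtain ⟨p, hp⟩ := G.reach v
  have hs : T.Anc a G.s → G.s = a := hroot ▸ ParentTree.Anc.root_eq
  exact .of_unique_entry (fun _ _ ↦ hpp.anc_or_eq_of_arc) hs hp.reflTransGen hav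

theorem IsDerivedArcOf.anc (h : IsDerivedArcOf G T v w a) : T.Anc a v := by
  obtain ⟨-, -, ⟨-, rfl⟩ | ⟨-, -, -, hav⟩⟩ := h
  · exact .refl T a
  · exact hav

end DerivedArcs

theorem stmt10_general (G : FlowGraph V) (T : ParentTree V)
    (hroot : T.root = G.s) (hpp : ParentProperty G T)
    (v w a : V) (h : IsDerivedArcOf G T v w a) :
    ∃ p : List V, IsWalk G.A a w p ∧ ∀ x ∈ p, x = w ∨ T.Anc a x := by
  have hav : ReachableWithin G.A {x | T.Anc a x} a v := hpp.reachableWithin_of_anc hroot h.anc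
  have haw : ReachableWithin G.A (insert w {x | T.Anc a x}) a w :=
    (hav.mono (Set.subset_insert _ _)).tail h.1 (Set.mem_insert _ _)
  exact haw

/-- If `T` has the parent property and `(a, w)` is the derived arc of an arc
`(v, w)` of `G`, then `G` contains a path from `a` to `w` containing only `w`
and descendants of `a` in `T`. -/
theorem stmt10 [Fintype V] (G : FlowGraph V) (T : ParentTree V)
    (hroot : T.root = G.s) (hpp : ParentProperty G T)
    (v w a : V) (h : IsDerivedArcOf G T v w a) :
    ∃ p : List V, IsWalk G.A a w p ∧ ∀ x ∈ p, x = w ∨ T.Anc a x :=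
  stmt10_general G T hroot hpp v w a h
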